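/- Let A, A', B, B' be convex polyhedral cones in ℝ³ with apex the origin O and non-empty interior, such that A, A', −B, −B' ⊂ {x : x₃ ≥ 0} and each of A, B, A', B' meets {x₃ = 0} only at O. Set F = A ∩ {x₃ = 1}, G = (−B) ∩ {x₃ = 1}, F' = A' ∩ {x₃ = 1}, G' = (−B') ∩ {x₃ = 1}, assume g_{A,B} = g_{A',B'}, let H = conv(F ∪ G) = conv(F' ∪ G') with vertices z₁,…,z_n in counterclockwise order, and assume hypotheses (1)–(3): (1) z_i ∈ F ∩ G iff z_i ∈ F' ∩ G'; (2) [z_i, z_{i+1}] is an edge of F or of G iff it is an edge of F' or of G'; (3) if z_i ∉ F ∩ G, the polygon among F and G containing z_i coincides in a neighbourhood of z_i with the polygon among F' and G' containing z_i. If z_i ∉ F ∩ G for some i, then the polygon among F and G which does not contain z_i and the polygon among F' and G' which does not contain z_i have equal −1-chord functions at z_i. -/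

import Mathlib

open MeasureTheory Pointwise

/-- The cross covariogram of sets `K, L ⊆ ℝ³`: `g_{K,L}(x) = λ₃(K ∩ (L + x))`. -/
noncomputable def crossCovariogram (K L : Set (EuclideanSpace ℝ (Fin 3)))
    (x : EuclideanSpace ℝ (Fin 3)) : ℝ :=
  (volume (K ∩ ((x + ·) '' L))).toReal

/-- A convex polyhedral cone with apex the origin: a finite intersection of closed
half-spaces whose boundary planes pass through the origin. -/
def IsPolyhedralCone (C : Set (EuclideanSpace ℝ (Fin 3))) : Prop :=
  ∃ S : Finset (EuclideanSpace ℝ (Fin 3)),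
    C = {x | ∀ s ∈ S, @inner ℝ _ _ s x ≤ (0 : ℝ)}

/-- The exposed face of a convex set `Q` in direction `w`. -/
def exposedFace (Q : Set (EuclideanSpace ℝ (Fin 3)))
    (w : EuclideanSpace ℝ (Fin 3)) : Set (EuclideanSpace ℝ (Fin 3)) :=
  {x ∈ Q | ∀ y ∈ Q, @inner ℝ _ _ w y ≤ @inner ℝ _ _ w x}

/-- `S` is an edge (a one-dimensional exposed face) of `Q`. -/
def IsEdgeOf (Q S : Set (EuclideanSpace ℝ (Fin 3))) : Prop :=
  (∃ w : EuclideanSpace ℝ (Fin 3), w ≠ 0 ∧ S = exposedFace Q w) ∧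
    Module.finrank ℝ (vectorSpan ℝ S) = 1

/-- The `−1`-chord function of `K` at `p`, evaluated on the line through `p` with unit
direction `u`: `∫_{K ∩ l} ‖x − p‖⁻² dλ₁(x)`. -/
noncomputable def chordFunctionNeg₁ (K : Set (EuclideanSpace ℝ (Fin 3)))
    (p u : EuclideanSpace ℝ (Fin 3)) : ℝ :=
  ∫ t in {t : ℝ | p + t • u ∈ K}, |t|⁻¹ ^ 2

structure UpCone (K : Set (EuclideanSpace ℝ (Fin 3))) : Prop where
  closed : IsClosed K
  convex : Convex ℝ K
  smul : ∀ t : ℝ, 0 ≤ t → ∀ x ∈ K, t • x ∈ K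
  nonneg : ∀ x ∈ K, 0 ≤ x 2
  zero : ∀ x ∈ K, x 2 = 0 → x = 0
  int : (interior K).Nonempty

lemma UpCone.add {K : Set (EuclideanSpace ℝ (Fin 3))} (h : UpCone K)
    {x y : EuclideanSpace ℝ (Fin 3)} (hx : x ∈ K) (hy : y ∈ K) : x + y ∈ K := by
  have := h.smul 2 (by norm_num) _
    (h.convex hx hy (a := 1 / 2) (b := 1 / 2) (by norm_num) (by norm_num) (by norm_num))
  simpa [smul_add, smul_smul] using this

lemma UpCone.zero_mem {K : Set (EuclideanSpace ℝ (Fin 3))} (h : UpCone K) : 0 ∈ K := by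
  obtain ⟨x, hx⟩ := h.int
  simpa using h.smul 0 le_rfl x (interior_subset hx)

lemma cone_bound (K L : Set (EuclideanSpace ℝ (Fin 3))) (hK : IsClosed K) (hL : IsClosed L)
    (hKs : ∀ t : ℝ, 0 ≤ t → ∀ x ∈ K, t • x ∈ K) (hLs : ∀ t : ℝ, 0 ≤ t → ∀ x ∈ L, t • x ∈ L)
    (h0 : 0 ∈ L) (h : ∀ x ∈ K, x ∈ L → x = 0) :
    ∃ R : ℝ, 0 ≤ R ∧ ∀ x ∈ K, ∀ w ∈ L, ‖x‖ ≤ R * ‖x - w‖ := by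
  have hcomp : IsCompact (K ∩ Metric.sphere 0 1) := (isCompact_sphere 0 1).inter_left hK
  rcases (K ∩ Metric.sphere 0 1).eq_empty_or_nonempty with he | hne
  · refine ⟨0, le_rfl, fun x hx w _ => ?_⟩
    by_cases hx0 : x = 0
    · simp [hx0]
    · exfalso
      have : ‖x‖⁻¹ • x ∈ K ∩ Metric.sphere 0 1 := by
        refine ⟨hKs _ (by positivity) _ hx, ?_⟩
        simp [norm_smul, hx0]
      rw [he] at this
      exact this
  · obtain ⟨m, hm, hmin⟩ := hcomp.exists_isMinOn hne (Metric.continuous_infDist_pt L).continuousOn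
    have hm0 : m ∉ L := by
      intro hmL
      have := h m hm.1 hmL
      have h2 := hm.2
      simp [this] at h2
    have hpos := (hL.notMem_iff_infDist_pos ⟨0, h0⟩).1 hm0
    refine ⟨(Metric.infDist m L)⁻¹, by positivity, fun x hx w hw => ?_⟩
    by_cases hx0 : x = 0
    · rw [hx0, norm_zero]; positivity
    have hxn : 0 < ‖x‖ := norm_pos_iff.2 hx0
    have hmem : ‖x‖⁻¹ • x ∈ K ∩ Metric.sphere 0 1 := by
      refine ⟨hKs _ (by positivity) _ hx, ?_⟩
      simp [norm_smul, hx0]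
    have h1 : Metric.infDist m L ≤ Metric.infDist (‖x‖⁻¹ • x) L := hmin hmem
    have h2 : Metric.infDist (‖x‖⁻¹ • x) L ≤ dist (‖x‖⁻¹ • x) (‖x‖⁻¹ • w) :=
      Metric.infDist_le_dist_of_mem (hLs _ (by positivity) _ hw)
    rw [dist_eq_norm, ← smul_sub, norm_smul, norm_inv, norm_norm] at h2
    rw [inv_mul_eq_div, le_div_iff₀ hpos]
    have h3 := h1.trans h2
    rw [inv_mul_eq_div, le_div_iff₀ hxn] at h3
    linarith

lemma crossCov_eq (A C : Set (EuclideanSpace ℝ (Fin 3))) (x : EuclideanSpace ℝ (Fin 3)) :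
    crossCovariogram A (-C) x = (volume (A ∩ {w | x - w ∈ C})).toReal := by
  unfold crossCovariogram
  congr 3
  ext w
  simp only [Set.image_add_left, Set.mem_preimage, Set.mem_neg, Set.mem_ofPred_eq]
  rw [show -(-x + w) = x - w by abel]

lemma vol_reflect (A C : Set (EuclideanSpace ℝ (Fin 3))) (hA : IsClosed A) (hC : IsClosed C)
    (x : EuclideanSpace ℝ (Fin 3)) :
    volume (A ∩ {w | x - w ∈ C}) = volume (C ∩ {w | x - w ∈ A}) := by
  have hmp := Measure.measurePreserving_sub_left (volume : Measure (EuclideanSpace ℝ (Fin 3))) x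
  have hm : MeasurableSet (C ∩ {w | x - w ∈ A}) :=
    (hC.inter (hA.preimage (by fun_prop : Continuous fun w => x - w))).measurableSet
  rw [← hmp.measure_preimage hm.nullMeasurableSet]
  congr 1
  ext w
  simp [and_comm]

lemma local_vol (T : ((ℝ × ℝ) × ℝ) ≃L[ℝ] EuclideanSpace ℝ (Fin 3))
    (z : EuclideanSpace ℝ (Fin 3)) (hTz : T (0, 1) = z)
    (A C : Set (EuclideanSpace ℝ (Fin 3))) (hA : UpCone A) (hC : UpCone C) (hzA : z ∈ A)
    (hloc : ∀ᶠ x in nhds z, (x ∈ A ↔ 0 ≤ (T.symm x).1))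
    (hDC : ∀ x, 0 ≤ (T.symm x).1 → -x ∈ C → x = 0) (y : EuclideanSpace ℝ (Fin 3)) :
    volume ({x | 0 ≤ (T.symm x).1} ∩ {x | y - x ∈ C}) ≠ ⊤ ∧
    ∀ᶠ ε in nhdsWithin (0 : ℝ) (Set.Ioi 0),
      volume (A ∩ {x | z + ε • y - x ∈ C}) =
        ENNReal.ofReal (ε ^ 3) * volume ({x | 0 ≤ (T.symm x).1} ∩ {x | y - x ∈ C}) := by
  have hTz' : T.symm z = (0, 1) := by rw [← hTz]; simp
  set D : Set (EuclideanSpace ℝ (Fin 3)) := {x | 0 ≤ (T.symm x).1} with hD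
  have hDs : ∀ t : ℝ, 0 ≤ t → ∀ x ∈ D, t • x ∈ D := by
    intro t ht x hx
    simp only [hD, Set.mem_ofPred_eq, map_smul, Prod.smul_fst] at hx ⊢
    exact smul_nonneg ht hx
  have hDz : ∀ x, z + x ∈ D ↔ x ∈ D := by
    intro x
    simp [hD, hTz']
  have hDcl : IsClosed D := by
    have : Continuous fun x => (T.symm x).1 := by fun_prop
    exact isClosed_le continuous_const this
  obtain ⟨R, hR0, hR⟩ := cone_bound D (-C) hDcl hC.closed.neg hDs
    (fun t ht x hx => by
      have := hC.smul t ht _ hx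
      simpa using this)
    (by simpa using hC.zero_mem) (fun x hx hx' => hDC x hx hx')
  have hbd : ∀ x ∈ D, y - x ∈ C → ‖x‖ ≤ R * ‖y‖ := by
    intro x hx hxy
    have := hR x hx (x - y) (by simpa using hxy)
    simpa using this
  obtain ⟨ρ, hρ, hball⟩ := Metric.eventually_nhds_iff.1 hloc
  have hAD : ∀ x ∈ A, x ∈ D := by
    intro x hx
    set δ := ρ / (2 * (‖x‖ + 1)) with hδ
    have hδ0 : 0 < δ := by positivity
    have h1 : dist (z + δ • x) z < ρ := by
      rw [dist_eq_norm, add_sub_cancel_left, norm_smul, Real.norm_of_nonneg hδ0.le, hδ,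
        div_mul_eq_mul_div, div_lt_iff₀ (by positivity)]
      nlinarith [norm_nonneg x]
    have h2 := (hball h1).1 (hA.add hzA (hA.smul δ hδ0.le x hx))
    have h3 := (hDz _).1 h2
    have h4 := hDs δ⁻¹ (by positivity) _ h3
    rwa [inv_smul_smul₀ hδ0.ne'] at h4
  constructor
  · refine (Bornology.IsBounded.measure_lt_top ?_).ne
    refine (Metric.isBounded_closedBall (x := (0 : EuclideanSpace ℝ (Fin 3))) (r := R * ‖y‖)).subset ?_
    rintro x ⟨hx, hxy⟩
    simpa using hbd x hx hxy
  · have hev : ∀ᶠ ε in nhdsWithin (0 : ℝ) (Set.Ioi 0), ε * (R * ‖y‖) < ρ := by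
      have : Filter.Tendsto (fun ε : ℝ => ε * (R * ‖y‖)) (nhds 0) (nhds (0 * (R * ‖y‖))) := by
        exact (continuous_id.mul continuous_const).tendsto 0
      rw [zero_mul] at this
      exact (this.mono_left nhdsWithin_le_nhds).eventually_lt_const hρ
    filter_upwards [hev, self_mem_nhdsWithin] with ε hε hε0
    have hε0 : 0 < ε := hε0
    have hset : A ∩ {x | z + ε • y - x ∈ C} = (fun x => z + x) '' (ε • (D ∩ {x | y - x ∈ C})) := by
      ext x
      constructor
      · rintro ⟨hxA, hxC⟩
        refine ⟨x - z, ⟨ε⁻¹ • (x - z), ⟨?_, ?_⟩, ?_⟩, ?_⟩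
        · refine hDs _ (by positivity) _ ((hDz _).1 ?_)
          simpa using hAD x hxA
        · have := hC.smul ε⁻¹ (by positivity) _ hxC
          have h2 : y - ε⁻¹ • (x - z) = ε⁻¹ • (z + ε • y - x) := by
            rw [smul_sub, smul_sub, smul_add, inv_smul_smul₀ hε0.ne']; abel
          simpa [h2] using this
        · exact smul_inv_smul₀ hε0.ne' _
        · simp
      · rintro ⟨_, ⟨x, ⟨hxD, hxC⟩, rfl⟩, rfl⟩
        constructor
        · refine (hball ?_).2 ((hDz _).2 (hDs ε hε0.le x hxD))
          simp only [dist_eq_norm, add_sub_cancel_left, norm_smul, Real.norm_of_nonneg hε0.le]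
          exact lt_of_le_of_lt (by gcongr; exact hbd x hxD hxC) hε
        · have := hC.smul ε hε0.le _ hxC
          have h2 : z + ε • y - (z + ε • x) = ε • (y - x) := by rw [smul_sub]; abel
          simpa [h2] using this
    rw [hset, Set.image_add_left, measure_preimage_add, Measure.addHaar_smul]
    simp [abs_of_pos hε0]

lemma vol_coord (T : ((ℝ × ℝ) × ℝ) ≃L[ℝ] EuclideanSpace ℝ (Fin 3)) :
    ∃ c : ENNReal, c ≠ 0 ∧ c ≠ ⊤ ∧ ∀ X, volume X = c * volume (T ⁻¹' X) := by
  have i1 : (volume : Measure (ℝ × ℝ)).IsAddHaarMeasure :=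
    inferInstanceAs ((volume : Measure ℝ).prod (volume : Measure ℝ)).IsAddHaarMeasure
  have i2 : (volume : Measure ((ℝ × ℝ) × ℝ)).IsAddHaarMeasure :=
    inferInstanceAs ((volume : Measure (ℝ × ℝ)).prod (volume : Measure ℝ)).IsAddHaarMeasure
  have : (Measure.map T (volume : Measure ((ℝ × ℝ) × ℝ))).IsAddHaarMeasure :=
    T.isAddHaarMeasure_map _
  have h := Measure.isAddLeftInvariant_eq_smul (volume : Measure (EuclideanSpace ℝ (Fin 3)))
    (Measure.map T (volume : Measure ((ℝ × ℝ) × ℝ)))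
  generalize (Measure.addHaarScalarFactor (volume : Measure (EuclideanSpace ℝ (Fin 3)))
      (Measure.map T (volume : Measure ((ℝ × ℝ) × ℝ)))) = c at h
  refine ⟨(c : ENNReal), ?_, ENNReal.coe_ne_top, fun X => ?_⟩
  · intro h0
    have h1 : c = 0 := by exact_mod_cast h0
    rw [h1, zero_smul] at h
    exact (NeZero.ne (volume : Measure (EuclideanSpace ℝ (Fin 3)))) h
  · have h2 : Measure.map T (volume : Measure ((ℝ × ℝ) × ℝ)) X = volume (T ⁻¹' X) :=
      T.toHomeomorph.toMeasurableEquiv.map_apply X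
    conv_lhs => rw [h]
    rw [Measure.smul_apply, h2]
    rfl

lemma slice_ae (K L : Set ((ℝ × ℝ) × ℝ)) (hK : IsClosed K) (hL : IsClosed L)
    (h : ∀ q : ℝ × ℝ, volume (K ∩ {p | p.1 ≤ q}) = volume (L ∩ {p | p.1 ≤ q}))
    (hfin : ∀ q : ℝ × ℝ, volume (K ∩ {p | p.1 ≤ q}) ≠ ⊤) :
    (fun q : ℝ × ℝ => volume (Prod.mk q ⁻¹' K)) =ᵐ[volume]
      (fun q : ℝ × ℝ => volume (Prod.mk q ⁻¹' L)) := by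
  have key : ∀ (M : Set ((ℝ × ℝ) × ℝ)), IsClosed M → ∀ s : Set (ℝ × ℝ), MeasurableSet s →
      ((volume.restrict M).map Prod.fst) s = ∫⁻ q in s, volume (Prod.mk q ⁻¹' M) := by
    intro M hM s hs
    rw [Measure.map_apply measurable_fst hs, Measure.restrict_apply (measurable_fst hs),
      Measure.volume_eq_prod, Measure.prod_apply ((measurable_fst hs).inter hM.measurableSet),
      ← lintegral_indicator hs]
    congr 1
    ext q
    by_cases hq : q ∈ s
    · rw [Set.indicator_of_mem hq]; congr 1; ext t; simp [hq]
    · rw [Set.indicator_of_notMem hq]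
      convert measure_empty (μ := (volume : Measure ℝ))
      ext t; simp [hq]
  have hIic : ∀ (M : Set ((ℝ × ℝ) × ℝ)) (q : ℝ × ℝ),
      ((volume.restrict M).map Prod.fst) (Set.Iic q) = volume (M ∩ {p | p.1 ≤ q}) := by
    intro M q
    have h1 : MeasurableSet (Set.Iic q) := measurableSet_Iic
    rw [Measure.map_apply measurable_fst h1, Measure.restrict_apply (measurable_fst h1),
      Set.inter_comm]
    rfl
  have hm : (volume.restrict K).map Prod.fst = (volume.restrict L).map Prod.fst := by
    refine Measure.ext_of_generateFrom_of_iUnion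
      (Set.image2 (fun x1 x2 => x1 ×ˢ x2) (Set.range (Set.Iic : ℝ → Set ℝ)) (Set.range (Set.Iic : ℝ → Set ℝ)))
      (fun n : ℕ => Set.Iic ((n : ℝ), (n : ℝ))) ?_ ?_ ?_ ?_ ?_ ?_
    · have hs : IsCountablySpanning (Set.range (Set.Iic : ℝ → Set ℝ)) := by
        refine ⟨fun n : ℕ => Set.Iic (n : ℝ), fun n => ⟨_, rfl⟩, ?_⟩
        ext x
        simpa using exists_nat_ge x
      rw [← generateFrom_prod_eq hs hs, ← borel_eq_generateFrom_Iic,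
        ← BorelSpace.measurable_eq (α := ℝ)]
    · exact isPiSystem_Iic.prod isPiSystem_Iic
    · ext x
      obtain ⟨n, hn⟩ := exists_nat_ge (max x.1 x.2)
      simp only [Set.mem_iUnion, Set.mem_univ, iff_true]
      exact ⟨n, ⟨le_trans (le_max_left _ _) hn, le_trans (le_max_right _ _) hn⟩⟩
    · intro n
      exact ⟨_, ⟨_, rfl⟩, _, ⟨_, rfl⟩, (Set.Iic_prod_eq _).symm⟩
    · intro n
      rw [hIic]; exact hfin _
    · rintro s ⟨_, ⟨a, rfl⟩, _, ⟨b, rfl⟩, rfl⟩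
      have : (Set.Iic a ×ˢ Set.Iic b : Set (ℝ × ℝ)) = Set.Iic (a, b) := (Set.Iic_prod_eq (a, b)).symm
      simp only [this]
      rw [hIic, hIic, h]
  refine ae_eq_of_forall_setLIntegral_eq_of_sigmaFinite
    (measurable_measure_prodMk_left hK.measurableSet)
    (measurable_measure_prodMk_left hL.measurableSet) ?_
  intro s hs _
  rw [← key K hK s hs, ← key L hL s hs, hm]

lemma slice_le (K L : Set ((ℝ × ℝ) × ℝ)) (hKc : Convex ℝ K)
    (hL : IsClosed L) (hKi : (interior K).Nonempty)
    (hb : ∃ R : ℝ, ∀ p ∈ L, |p.2| ≤ R * ‖p.1‖)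
    (hae : (fun q : ℝ × ℝ => volume (Prod.mk q ⁻¹' K)) =ᵐ[volume]
      (fun q : ℝ × ℝ => volume (Prod.mk q ⁻¹' L))) (q : ℝ × ℝ) :
    volume (Prod.mk q ⁻¹' K) ≤ volume (Prod.mk q ⁻¹' L) := by
  obtain ⟨p0, hp0⟩ := hKi
  obtain ⟨δ, hδ, hball⟩ := Metric.isOpen_iff.1 isOpen_interior p0 hp0
  obtain ⟨R, hR⟩ := hb
  have hex : ∀ n : ℕ, ∃ r : ℝ × ℝ, ‖r‖ < δ ∧
      ENNReal.ofReal (1 - 1 / ((n : ℝ) + 2)) * volume (Prod.mk q ⁻¹' K) ≤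
        volume (Prod.mk (q + (1 / ((n : ℝ) + 2)) • (p0.1 + r - q)) ⁻¹' L) := by
    intro n
    set ε : ℝ := 1 / ((n : ℝ) + 2) with hε
    have hε0 : 0 < ε := by positivity
    have hε1 : ε < 1 := by
      rw [hε, div_lt_one (by positivity)]
      have : (0 : ℝ) ≤ n := by positivity
      linarith
    have hpos : 0 < volume (Metric.ball (q + ε • (p0.1 - q)) (ε * δ)) :=
      Metric.measure_ball_pos _ _ (by positivity)
    obtain ⟨q', hq', hq'eq⟩ := (frequently_ae_mem_iff.2 hpos.ne').and_eventually hae |>.exists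
    have hr : q' = q + ε • (p0.1 + ε⁻¹ • (q' - (q + ε • (p0.1 - q))) - q) := by
      rw [smul_sub, smul_add, smul_inv_smul₀ hε0.ne', smul_sub]
      abel
    have hrn : ‖ε⁻¹ • (q' - (q + ε • (p0.1 - q)))‖ < δ := by
      rw [norm_smul, Real.norm_of_nonneg (by positivity), ← dist_eq_norm, inv_mul_lt_iff₀ hε0]
      exact hq'
    refine ⟨_, hrn, ?_⟩
    beta_reduce at hq'eq
    rw [← hr, ← hq'eq]
    set r := ε⁻¹ • (q' - (q + ε • (p0.1 - q))) with hrdef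
    have hsub : (fun t => ε * p0.2 + t) '' ((1 - ε) • (Prod.mk q ⁻¹' K)) ⊆ Prod.mk q' ⁻¹' K := by
      rintro _ ⟨_, ⟨t, ht, rfl⟩, rfl⟩
      have hp : (p0.1 + r, p0.2) ∈ K := by
        apply interior_subset
        apply hball
        rw [Metric.mem_ball, Prod.dist_eq]
        simp only [dist_self]
        rw [dist_eq_norm, add_sub_cancel_left]
        exact max_lt hrn hδ
      have := hKc ht hp (a := 1 - ε) (b := ε) (by linarith) hε0.le (by ring)
      have h2 : (1 - ε) • (q, t) + ε • (p0.1 + r, p0.2) = (q', ε * p0.2 + (1 - ε) • t) := by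
        rw [hr]
        ext <;> simp <;> ring
      rw [h2] at this
      exact this
    refine le_trans (le_of_eq ?_) (measure_mono hsub)
    rw [Set.image_add_left, measure_preimage_add, Measure.addHaar_smul]
    simp [abs_of_pos (by linarith : 0 < 1 - ε)]
  choose r hr1 hr2 using hex
  set qs : ℕ → ℝ × ℝ := fun n => q + (1 / ((n : ℝ) + 2)) • (p0.1 + r n - q) with hqs
  have hεt : Filter.Tendsto (fun n : ℕ => 1 / ((n : ℝ) + 2)) Filter.atTop (nhds 0) := by
    have := (tendsto_one_div_add_atTop_nhds_zero_nat (𝕜 := ℝ)).comp (Filter.tendsto_add_atTop_nat 1)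
    refine this.congr fun n => ?_
    simp; ring
  have hqt : Filter.Tendsto qs Filter.atTop (nhds q) := by
    have h0 : Filter.Tendsto (fun n : ℕ => (1 / ((n : ℝ) + 2)) • (p0.1 + r n - q)) Filter.atTop (nhds 0) := by
      refine hεt.zero_smul_isBoundedUnder_le ?_
      refine Filter.isBoundedUnder_of ⟨‖p0.1 - q‖ + δ, fun n => ?_⟩
      have : p0.1 + r n - q = (p0.1 - q) + r n := by abel
      simp only [Function.comp, this]
      exact (norm_add_le _ _).trans (by linarith [hr1 n])
    simpa [hqs] using h0.const_add q
  have hqb : ∀ n, ‖qs n‖ ≤ ‖q‖ + (‖p0.1 - q‖ + δ) := by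
    intro n
    have h1 : ‖(1 / ((n : ℝ) + 2)) • (p0.1 + r n - q)‖ ≤ ‖p0.1 - q‖ + δ := by
      have : p0.1 + r n - q = (p0.1 - q) + r n := by abel
      rw [norm_smul, this, Real.norm_of_nonneg (by positivity)]
      have h3 : 1 / ((n : ℝ) + 2) ≤ 1 := by
        rw [div_le_one (by positivity)]
        have : (0 : ℝ) ≤ n := by positivity
        linarith
      have h4 : ‖(p0.1 - q) + r n‖ ≤ ‖p0.1 - q‖ + δ := (norm_add_le _ _).trans (by linarith [hr1 n])
      calc _ ≤ 1 * ‖(p0.1 - q) + r n‖ := by gcongr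
        _ ≤ _ := by linarith
    exact (norm_add_le _ _).trans (by linarith)
  set M := |R| * (‖q‖ + (‖p0.1 - q‖ + δ)) with hM
  have hmeas : ∀ q' : ℝ × ℝ, MeasurableSet (Prod.mk q' ⁻¹' L) := fun q' =>
    measurable_prodMk_left hL.measurableSet
  have hF := limsup_lintegral_le (μ := (volume : Measure ℝ))
    (f := fun n => (Prod.mk (qs n) ⁻¹' L).indicator (fun _ => (1 : ENNReal)))
    ((Set.Icc (-M) M).indicator (fun _ => 1))
    (fun n => measurable_const.indicator (hmeas _))
    (fun n => Filter.Eventually.of_forall fun t => by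
      refine Set.indicator_le_indicator_of_subset ?_ (fun _ => zero_le) t
      intro t ht
      have h1 := hR _ ht
      simp only at h1
      have : R * ‖qs n‖ ≤ M := by
        rw [hM]
        exact mul_le_mul (le_abs_self R) (hqb n) (norm_nonneg _) (abs_nonneg _)
      exact abs_le.1 (h1.trans this))
    (by rw [lintegral_indicator measurableSet_Icc]; simp)
  have hlim : Filter.Tendsto (fun n : ℕ => ENNReal.ofReal (1 - 1 / ((n : ℝ) + 2)) * volume (Prod.mk q ⁻¹' K))
      Filter.atTop (nhds (1 * volume (Prod.mk q ⁻¹' K))) := by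
    refine ENNReal.Tendsto.mul_const ?_ (Or.inl one_ne_zero)
    have := ENNReal.tendsto_ofReal (hεt.const_sub 1)
    simpa using this
  rw [one_mul] at hlim
  calc volume (Prod.mk q ⁻¹' K) = Filter.limsup (fun n : ℕ => ENNReal.ofReal (1 - 1 / ((n : ℝ) + 2)) * volume (Prod.mk q ⁻¹' K)) Filter.atTop := hlim.limsup_eq.symm
    _ ≤ Filter.limsup (fun n => volume (Prod.mk (qs n) ⁻¹' L)) Filter.atTop :=
        Filter.limsup_le_limsup (Filter.Eventually.of_forall hr2)
    _ ≤ _ := by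
        refine le_trans (le_of_eq ?_) hF
        congr 1
        ext n
        rw [lintegral_indicator (hmeas _)]; simp
    _ ≤ ∫⁻ t, (Prod.mk q ⁻¹' L).indicator (fun _ => (1 : ENNReal)) t := by
        refine lintegral_mono fun t => ?_
        by_cases ht : t ∈ Prod.mk q ⁻¹' L
        · rw [Set.indicator_of_mem ht]
          refine Filter.limsup_le_of_le (by isBoundedDefault) (Filter.Eventually.of_forall fun n => ?_)
          exact Set.indicator_le_self' (fun _ _ => zero_le) t
        · rw [Set.indicator_of_notMem ht]
          refine Filter.limsup_le_of_le (by isBoundedDefault) ?_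
          have h1 : Filter.Tendsto (fun n => (qs n, t)) Filter.atTop (nhds (q, t)) :=
            hqt.prodMk_nhds tendsto_const_nhds
          filter_upwards [h1.eventually (hL.isOpen_compl.mem_nhds ht)] with n hn
          exact (Set.indicator_of_notMem (s := Prod.mk (qs n) ⁻¹' L) hn _).le
    _ = volume (Prod.mk q ⁻¹' L) := by rw [lintegral_indicator (hmeas _)]; simp

lemma slice_bdd (T : ((ℝ × ℝ) × ℝ) ≃L[ℝ] EuclideanSpace ℝ (Fin 3))
    (z : EuclideanSpace ℝ (Fin 3)) (hTz : T (0, 1) = z) (hz : z 2 = 1)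
    (C : Set (EuclideanSpace ℝ (Fin 3))) (hC : UpCone C) (hzC : z ∉ C) :
    ∃ R : ℝ, ∀ p ∈ T ⁻¹' C, |p.2| ≤ R * ‖p.1‖ := by
  have hT2 : ∀ s : ℝ, T (0, s) = s • z := by
    intro s
    rw [← hTz, ← map_smul]; simp
  obtain ⟨R, hR0, hR⟩ := cone_bound C {x | (T.symm x).1 = 0} hC.closed
    (isClosed_eq (by fun_prop) continuous_const) hC.smul
    (fun t _ x hx => by
      simp only [Set.mem_ofPred_eq] at hx ⊢
      simp [hx]) (by simp)
    (fun x hx hx0 => by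
      have h1 : x = (T.symm x).2 • z := by
        rw [← hT2]
        apply T.symm.injective
        simp only [ContinuousLinearEquiv.symm_apply_apply]
        ext1
        · exact hx0
        · rfl
      set s := (T.symm x).2
      have h2 : x 2 = s := by rw [h1]; simp [hz]
      have h3 := hC.nonneg x hx
      rcases h3.eq_or_lt with h4 | h4
      · exact hC.zero x hx h4.symm
      · exfalso
        apply hzC
        have h5 : 0 < s := by rw [← h2]; exact h4
        have := hC.smul s⁻¹ (by positivity) x hx
        rw [h1, inv_smul_smul₀ h5.ne'] at this
        exact this)
  refine ⟨‖(T.symm : EuclideanSpace ℝ (Fin 3) →L[ℝ] ((ℝ × ℝ) × ℝ))‖ *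
    (R * ‖(T : ((ℝ × ℝ) × ℝ) →L[ℝ] EuclideanSpace ℝ (Fin 3))‖), fun p hp => ?_⟩
  have h1 := hR (T p) hp (T (0, p.2)) (by simp)
  have h2 : T p - T (0, p.2) = T (p.1, 0) := by
    rw [← map_sub]; congr 1; ext <;> simp
  rw [h2] at h1
  have h3 : ‖T (p.1, 0)‖ ≤ ‖(T : ((ℝ × ℝ) × ℝ) →L[ℝ] EuclideanSpace ℝ (Fin 3))‖ * ‖p.1‖ := by
    have := (T : ((ℝ × ℝ) × ℝ) →L[ℝ] EuclideanSpace ℝ (Fin 3)).le_opNorm (p.1, 0)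
    simpa [Prod.norm_def] using this
  have h4 : ‖p‖ ≤ ‖(T.symm : EuclideanSpace ℝ (Fin 3) →L[ℝ] ((ℝ × ℝ) × ℝ))‖ * ‖T p‖ := by
    have := (T.symm : EuclideanSpace ℝ (Fin 3) →L[ℝ] ((ℝ × ℝ) × ℝ)).le_opNorm (T p)
    simpa using this
  have h5 : |p.2| ≤ ‖p‖ := by
    rw [Prod.norm_def]; exact le_max_right _ _
  calc |p.2| ≤ ‖(T.symm : EuclideanSpace ℝ (Fin 3) →L[ℝ] ((ℝ × ℝ) × ℝ))‖ * ‖T p‖ := h5.trans h4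
    _ ≤ ‖(T.symm : EuclideanSpace ℝ (Fin 3) →L[ℝ] ((ℝ × ℝ) × ℝ))‖ *
      (R * (‖(T : ((ℝ × ℝ) × ℝ) →L[ℝ] EuclideanSpace ℝ (Fin 3))‖ * ‖p.1‖)) := by
        gcongr
        exact h1.trans (by gcongr)
    _ = _ := by ring

lemma line_eq (T : ((ℝ × ℝ) × ℝ) ≃L[ℝ] EuclideanSpace ℝ (Fin 3))
    (z : EuclideanSpace ℝ (Fin 3)) (hTz : T (0, 1) = z) (hz : z 2 = 1)
    (A C A' C' : Set (EuclideanSpace ℝ (Fin 3))) (hA : UpCone A) (hC : UpCone C)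
    (hA' : UpCone A') (hC' : UpCone C') (hzA : z ∈ A) (hzA' : z ∈ A')
    (hzC : z ∉ C) (hzC' : z ∉ C')
    (hloc : ∀ᶠ x in nhds z, (x ∈ A ↔ 0 ≤ (T.symm x).1))
    (hloc' : ∀ᶠ x in nhds z, (x ∈ A' ↔ 0 ≤ (T.symm x).1))
    (hDC : ∀ x, 0 ≤ (T.symm x).1 → -x ∈ C → x = 0)
    (hDC' : ∀ x, 0 ≤ (T.symm x).1 → -x ∈ C' → x = 0)
    (hcov : ∀ x, (volume (A ∩ {w | x - w ∈ C})).toReal = (volume (A' ∩ {w | x - w ∈ C'})).toReal)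
    (q : ℝ × ℝ) :
    volume (Prod.mk q ⁻¹' (T ⁻¹' C)) = volume (Prod.mk q ⁻¹' (T ⁻¹' C')) := by
  have hDcl : IsClosed {x : EuclideanSpace ℝ (Fin 3) | 0 ≤ (T.symm x).1} := by
    have : Continuous fun x => (T.symm x).1 := by fun_prop
    exact isClosed_le continuous_const this
  have hv : ∀ y, volume ({x | 0 ≤ (T.symm x).1} ∩ {x | y - x ∈ C}) =
      volume ({x | 0 ≤ (T.symm x).1} ∩ {x | y - x ∈ C'}) := by
    intro y
    obtain ⟨f1, e1⟩ := local_vol T z hTz A C hA hC hzA hloc hDC y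
    obtain ⟨f2, e2⟩ := local_vol T z hTz A' C' hA' hC' hzA' hloc' hDC' y
    have h3 : ∀ᶠ ε in nhdsWithin (0 : ℝ) (Set.Ioi 0), 0 < ε := self_mem_nhdsWithin
    obtain ⟨ε, ⟨h1, h2⟩, h3⟩ := ((e1.and e2).and h3).exists
    have := hcov (z + ε • y)
    rw [h1, h2, ENNReal.toReal_mul, ENNReal.toReal_mul] at this
    have h4 : (ENNReal.ofReal (ε ^ 3)).toReal ≠ 0 := by
      rw [ENNReal.toReal_ofReal (by positivity)]; positivity
    exact (ENNReal.toReal_eq_toReal_iff' f1 f2).1 (mul_left_cancel₀ h4 this)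
  obtain ⟨c, hc0, hct, hc⟩ := vol_coord T
  have hco : ∀ (K : Set (EuclideanSpace ℝ (Fin 3))), IsClosed K → ∀ q : ℝ × ℝ,
      volume ({x | 0 ≤ (T.symm x).1} ∩ {x | T (q, 0) - x ∈ K}) =
        c * volume ((T ⁻¹' K) ∩ {p | p.1 ≤ q}) := by
    intro K hK q
    rw [vol_reflect _ _ hDcl hK, hc]
    congr 2
    ext p
    simp
  have hfin : ∀ q : ℝ × ℝ, volume ((T ⁻¹' C) ∩ {p | p.1 ≤ q}) ≠ ⊤ := by
    intro q hq
    have h1 := (local_vol T z hTz A C hA hC hzA hloc hDC (T (q, 0))).1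
    rw [hco C hC.closed, hq, ENNReal.mul_top hc0] at h1
    exact h1 rfl
  have heq : ∀ q : ℝ × ℝ, volume ((T ⁻¹' C) ∩ {p | p.1 ≤ q}) = volume ((T ⁻¹' C') ∩ {p | p.1 ≤ q}) := by
    intro q
    have h1 := hv (T (q, 0))
    rw [hco C hC.closed, hco C' hC'.closed] at h1
    exact (ENNReal.mul_right_inj hc0 hct).1 h1
  have hcl := hC.closed.preimage T.continuous
  have hcl' := hC'.closed.preimage T.continuous
  have hae := slice_ae _ _ hcl hcl' heq hfin
  have hint : ∀ K, UpCone K → (interior (T ⁻¹' K)).Nonempty := by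
    intro K hK
    obtain ⟨x, hx⟩ := hK.int
    refine ⟨T.symm x, ?_⟩
    have := preimage_interior_subset_interior_preimage T.continuous (t := K)
    apply this
    simpa using hx
  have hcv : ∀ K, UpCone K → Convex ℝ (T ⁻¹' K) := fun K hK =>
    hK.convex.linear_preimage (T : ((ℝ × ℝ) × ℝ) →ₗ[ℝ] EuclideanSpace ℝ (Fin 3))
  exact le_antisymm
    (slice_le _ _ (hcv C hC) hcl' (hint C hC) (slice_bdd T z hTz hz C' hC' hzC') hae q)
    (slice_le _ _ (hcv C' hC') hcl (hint C' hC') (slice_bdd T z hTz hz C hC hzC) hae.symm q)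

lemma chord_eq (C : Set (EuclideanSpace ℝ (Fin 3))) (hC : UpCone C)
    (z u : EuclideanSpace ℝ (Fin 3)) (hz : z 2 = 1) (hzC : z ∉ C) (hu : u ≠ 0) (hu2 : u 2 = 0) :
    chordFunctionNeg₁ (C ∩ {x | x 2 = 1}) z u =
      (volume {s : ℝ | u + s • z ∈ C} + volume {s : ℝ | -u + s • z ∈ C}).toReal := by
  have hpos : ∀ v : EuclideanSpace ℝ (Fin 3), v 2 = 0 → v ≠ 0 → ∀ s : ℝ, v + s • z ∈ C → 0 < s := by
    intro v hv hv0 s hs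
    have h1 := hC.nonneg _ hs
    have h2 := hC.zero _ hs
    simp only [PiLp.add_apply, PiLp.smul_apply, hv, hz, smul_eq_mul, mul_one, zero_add] at h1 h2
    rcases h1.eq_or_lt with h | h
    · exfalso
      have := h2 h.symm
      rw [← h] at this
      simp at this
      exact hv0 this
    · exact h
  have hmeas : ∀ v : EuclideanSpace ℝ (Fin 3), MeasurableSet {s : ℝ | v + s • z ∈ C} := fun v =>
    (hC.closed.preimage (by fun_prop : Continuous fun s : ℝ => v + s • z)).measurableSet
  have hm2 : MeasurableSet {s : ℝ | -u + (-s) • z ∈ C} :=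
    (hC.closed.preimage (by fun_prop : Continuous fun s : ℝ => -u + (-s) • z)).measurableSet
  set S : Set ℝ := {s : ℝ | u + s • z ∈ C} ∪ {s : ℝ | -u + (-s) • z ∈ C} with hS
  have hS0 : ∀ s ∈ S, s ≠ 0 := by
    rintro s (hs | hs)
    · exact (hpos u hu2 hu s hs).ne'
    · have := hpos (-u) (by simp [hu2]) (by simpa using hu) _ hs
      have h : s < 0 := by linarith
      exact h.ne
  have himg : {t : ℝ | z + t • u ∈ C ∩ {x | x 2 = 1}} = (fun s => s⁻¹) '' S := by
    ext t
    have h1 : (z + t • u) 2 = 1 := by simp [hz, hu2]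
    constructor
    · rintro ⟨ht, -⟩
      have ht0 : t ≠ 0 := by
        rintro rfl
        simp at ht
        exact hzC ht
      refine ⟨t⁻¹, ?_, inv_inv t⟩
      rcases lt_or_gt_of_ne ht0 with h | h
      · right
        have := hC.smul (-t)⁻¹ (by simpa using h.le) _ ht
        have e : -u + (-t⁻¹) • z = (-t)⁻¹ • (z + t • u) := by
          rw [smul_add, smul_smul, inv_neg]
          simp [ht0, add_comm]
        simpa only [Set.mem_ofPred_eq, e] using this
      · left
        have := hC.smul t⁻¹ (by positivity) _ ht
        have e : u + t⁻¹ • z = t⁻¹ • (z + t • u) := by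
          rw [smul_add, smul_smul]
          simp [ht0, add_comm]
        simpa only [Set.mem_ofPred_eq, e] using this
    · rintro ⟨s, hs, rfl⟩
      have hs0 := hS0 s hs
      refine ⟨?_, by simpa using h1⟩
      rcases hs with hs | hs
      · have hp := hpos u hu2 hu s hs
        have := hC.smul s⁻¹ (by positivity) _ hs
        have e : z + s⁻¹ • u = s⁻¹ • (u + s • z) := by
          rw [smul_add, smul_smul]
          simp [hs0, add_comm]
        simpa only [e] using this
      · have hp := hpos (-u) (by simp [hu2]) (by simpa using hu) _ hs
        have := hC.smul (-s)⁻¹ (by positivity) _ hs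
        have e : z + s⁻¹ • u = (-s)⁻¹ • (-u + (-s) • z) := by
          rw [smul_add, smul_smul, inv_neg]
          simp [hs0, add_comm]
        simpa only [e] using this
  have hSm : MeasurableSet S := (hmeas u).union hm2
  unfold chordFunctionNeg₁
  rw [himg, integral_image_eq_integral_abs_deriv_smul hSm
    (fun s hs => (hasDerivAt_inv (hS0 s hs)).hasDerivWithinAt) (inv_injective.injOn)]
  have hone : ∀ s ∈ S, |-(s ^ 2)⁻¹| • |s⁻¹|⁻¹ ^ 2 = (1 : ℝ) := by
    intro s hs
    have := hS0 s hs
    rw [abs_neg, abs_inv, abs_inv, inv_inv, sq_abs, abs_of_nonneg (sq_nonneg s), smul_eq_mul]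
    field_simp
  rw [setIntegral_congr_fun hSm hone]
  simp only [integral_const, smul_eq_mul, mul_one, measureReal_restrict_apply_univ]
  rw [Measure.real, hS, measure_union ?_ hm2]
  · congr 2
    have := Measure.measurePreserving_neg (volume : Measure ℝ)
    rw [← this.measure_preimage (hmeas (-u)).nullMeasurableSet]
    rfl
  · rw [Set.disjoint_left]
    intro s h1 h2
    have a1 := hpos u hu2 hu s h1
    have a2 := hpos (-u) (by simp [hu2]) (by simpa using hu) _ h2
    linarith

lemma sum_subset (A C A' C' : Set (EuclideanSpace ℝ (Fin 3))) (hA : UpCone A) (hC : UpCone C)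
    (hA' : UpCone A') (hC' : UpCone C')
    (hcov : ∀ x, (volume (A ∩ {w | x - w ∈ C})).toReal = (volume (A' ∩ {w | x - w ∈ C'})).toReal)
    (x a' : EuclideanSpace ℝ (Fin 3)) (ha' : a' ∈ A') (hc' : x - a' ∈ C') :
    ∃ a ∈ A, x - a ∈ C := by
  have hbound : ∀ A C : Set (EuclideanSpace ℝ (Fin 3)), UpCone A → UpCone C →
      ∃ R : ℝ, 0 ≤ R ∧ ∀ x, ∀ w ∈ A, x - w ∈ C → ‖w‖ ≤ R * ‖x‖ := by
    intro A C hA hC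
    obtain ⟨R, hR0, hR⟩ := cone_bound A (-C) hA.closed hC.closed.neg hA.smul
      (fun t ht x hx => by
        have := hC.smul t ht _ hx
        simpa using this)
      (by simpa using hC.zero_mem) (fun x hx hx' => by
        apply hA.zero x hx
        have h1 := hA.nonneg x hx
        have h2 := hC.nonneg _ hx'
        simp at h2
        linarith)
    refine ⟨R, hR0, fun x w hw hx => ?_⟩
    have := hR w hw (w - x) (by simpa using hx)
    simpa using this
  obtain ⟨R, hR0, hR⟩ := hbound A C hA hC
  obtain ⟨R', hR0', hR'⟩ := hbound A' C' hA' hC'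
  obtain ⟨a0, ha0⟩ := hA'.int
  obtain ⟨c0, hc0⟩ := hC'.int
  have hex : ∀ n : ℕ, ∃ a ∈ A, x + (1 / ((n : ℝ) + 1)) • (a0 + c0) - a ∈ C := by
    intro n
    set δ : ℝ := 1 / ((n : ℝ) + 1) with hδ
    have hδ0 : 0 < δ := by positivity
    set y := x + δ • (a0 + c0) with hy
    set O := {w : EuclideanSpace ℝ (Fin 3) | δ⁻¹ • (w - a') ∈ interior A'} ∩
      {w | δ⁻¹ • (y - w - (x - a')) ∈ interior C'} with hO
    have hOo : IsOpen O := by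
      refine IsOpen.inter ?_ ?_
      · exact isOpen_interior.preimage (by fun_prop : Continuous fun w => δ⁻¹ • (w - a'))
      · exact isOpen_interior.preimage (by fun_prop : Continuous fun w => δ⁻¹ • (y - w - (x - a')))
    have hOn : O.Nonempty := by
      refine ⟨a' + δ • a0, ?_, ?_⟩
      · simpa [inv_smul_smul₀ hδ0.ne'] using ha0
      · have e : δ⁻¹ • (y - (a' + δ • a0) - (x - a')) = c0 := by
          have : y - (a' + δ • a0) - (x - a') = δ • c0 := by rw [hy, smul_add]; abel
          rw [this, inv_smul_smul₀ hδ0.ne']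
        simpa only [Set.mem_ofPred_eq, e] using hc0
    have hsub : O ⊆ A' ∩ {w | y - w ∈ C'} := by
      rintro w ⟨h1, h2⟩
      constructor
      · have := hA'.add ha' (hA'.smul δ hδ0.le _ (interior_subset h1))
        rwa [smul_inv_smul₀ hδ0.ne', add_sub_cancel] at this
      · have := hC'.add hc' (hC'.smul δ hδ0.le _ (interior_subset h2))
        rwa [smul_inv_smul₀ hδ0.ne', add_sub_cancel] at this
    have hpos : volume (A' ∩ {w | y - w ∈ C'}) ≠ 0 :=
      ((hOo.measure_pos volume hOn).trans_le (measure_mono hsub)).ne'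
    have hfin : volume (A' ∩ {w | y - w ∈ C'}) ≠ ⊤ := by
      refine (Bornology.IsBounded.measure_lt_top ?_).ne
      refine (Metric.isBounded_closedBall (x := (0 : EuclideanSpace ℝ (Fin 3))) (r := R' * ‖y‖)).subset ?_
      rintro w ⟨h1, h2⟩
      simpa using hR' y w h1 h2
    have hne : (volume (A ∩ {w | y - w ∈ C})).toReal ≠ 0 := by
      rw [hcov]
      exact ENNReal.toReal_ne_zero.2 ⟨hpos, hfin⟩
    have h0 := (ENNReal.toReal_ne_zero.1 hne).1
    obtain ⟨a, h1, h2⟩ := nonempty_of_measure_ne_zero h0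
    exact ⟨a, h1, h2⟩
  choose a ha1 ha2 using hex
  have hyt : Filter.Tendsto (fun n : ℕ => x + (1 / ((n : ℝ) + 1)) • (a0 + c0)) Filter.atTop (nhds x) := by
    have := (tendsto_one_div_add_atTop_nhds_zero_nat (𝕜 := ℝ)).smul_const (a0 + c0)
    simpa using this.const_add x
  have hbd : ∀ n, a n ∈ Metric.closedBall (0 : EuclideanSpace ℝ (Fin 3)) (R * (‖x‖ + ‖a0 + c0‖)) := by
    intro n
    have h1 := hR _ _ (ha1 n) (ha2 n)
    have h2 : ‖x + (1 / ((n : ℝ) + 1)) • (a0 + c0)‖ ≤ ‖x‖ + ‖a0 + c0‖ := by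
      refine (norm_add_le _ _).trans ?_
      rw [norm_smul, Real.norm_of_nonneg (by positivity)]
      have h3 : 1 / ((n : ℝ) + 1) ≤ 1 := by
        rw [div_le_one (by positivity)]
        have : (0 : ℝ) ≤ n := by positivity
        linarith
      have := mul_le_mul_of_nonneg_right h3 (norm_nonneg (a0 + c0))
      linarith
    rw [mem_closedBall_zero_iff]
    exact h1.trans (by gcongr)
  obtain ⟨b, -, φ, hφ, hb⟩ := (isCompact_closedBall _ _).tendsto_subseq hbd
  refine ⟨b, hA.closed.mem_of_tendsto hb (Filter.Eventually.of_forall fun n => ha1 _), ?_⟩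
  exact hC.closed.mem_of_tendsto ((hyt.comp hφ.tendsto_atTop).sub hb)
    (Filter.Eventually.of_forall fun n => ha2 _)

lemma mem_hull (A C : Set (EuclideanSpace ℝ (Fin 3))) (hA : UpCone A) (hC : UpCone C)
    (x a : EuclideanSpace ℝ (Fin 3)) (ha : a ∈ A) (hc : x - a ∈ C) (hx : 0 < x 2) :
    (x 2)⁻¹ • x ∈ convexHull ℝ ((A ∩ {x | x 2 = 1}) ∪ (C ∩ {x | x 2 = 1})) := by
  have norm1 : ∀ w : EuclideanSpace ℝ (Fin 3), 0 < w 2 → ((w 2)⁻¹ • w) 2 = 1 := by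
    intro w hw
    simp [hw.ne']
  set c := x - a with hcdef
  have hxac : x = a + c := by rw [hcdef]; abel
  have hx2 : x 2 = a 2 + c 2 := by rw [hxac]; rfl
  rcases (hA.nonneg a ha).eq_or_lt with h1 | h1
  · have ha0 := hA.zero a ha h1.symm
    have hxc : x = c := by rw [hxac, ha0, zero_add]
    refine subset_convexHull _ _ (Or.inr ⟨?_, norm1 x hx⟩)
    refine hC.smul _ (by positivity) _ ?_
    rw [hxc]; exact hc
  rcases (hC.nonneg c hc).eq_or_lt with h2 | h2
  · have hc0 := hC.zero c hc h2.symm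
    have hxa : x = a := by rw [hxac, hc0, add_zero]
    refine subset_convexHull _ _ (Or.inl ⟨?_, norm1 x hx⟩)
    refine hA.smul _ (by positivity) _ ?_
    rw [hxa]; exact ha
  have m1 : (a 2)⁻¹ • a ∈ convexHull ℝ ((A ∩ {x | x 2 = 1}) ∪ (C ∩ {x | x 2 = 1})) :=
    subset_convexHull _ _ (Or.inl ⟨hA.smul _ (by positivity) _ ha, norm1 a h1⟩)
  have m2 : (c 2)⁻¹ • c ∈ convexHull ℝ ((A ∩ {x | x 2 = 1}) ∪ (C ∩ {x | x 2 = 1})) :=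
    subset_convexHull _ _ (Or.inr ⟨hC.smul _ (by positivity) _ hc, norm1 c h2⟩)
  have := convex_convexHull ℝ _ m1 m2 (a := (x 2)⁻¹ * a 2) (b := (x 2)⁻¹ * c 2) (by positivity)
    (by positivity) (by rw [← mul_add, ← hx2, inv_mul_cancel₀ hx.ne'])
  rw [smul_smul, smul_smul, mul_assoc, mul_assoc, mul_inv_cancel₀ h1.ne', mul_inv_cancel₀ h2.ne',
    ← smul_add, ← hxac, mul_one] at this
  exact this

/-- Extremality of `z`: in a decomposition inside the cone over the hull, the second summand vanishes. -/
lemma ext_zero (A C C' : Set (EuclideanSpace ℝ (Fin 3))) (hA : UpCone A) (hC : UpCone C)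
    (hC' : UpCone C') (z : EuclideanSpace ℝ (Fin 3)) (hz : z 2 = 1)
    (hext : z ∈ Set.extremePoints ℝ (convexHull ℝ ((A ∩ {x | x 2 = 1}) ∪ (C ∩ {x | x 2 = 1}))))
    (hzC' : z ∉ C') (c : EuclideanSpace ℝ (Fin 3)) (hc : c ∈ C')
    (hnn : 0 ≤ (z - c) 2) (hz0 : (z - c) 2 = 0 → z - c = 0)
    (h1 : ∃ a ∈ A, (z - c) - a ∈ C) (h2 : ∃ a ∈ A, c - a ∈ C) : c = 0 := by
  rcases hnn.eq_or_lt with h3 | h3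
  · exfalso
    have := sub_eq_zero.1 (hz0 h3.symm)
    exact hzC' (this ▸ hc)
  rcases (hC'.nonneg c hc).eq_or_lt with h4 | h4
  · exact hC'.zero c hc h4.symm
  obtain ⟨a1, ha1, hc1⟩ := h1
  obtain ⟨a2, ha2, hc2⟩ := h2
  have m1 := mem_hull A C hA hC _ a1 ha1 hc1 h3
  have m2 := mem_hull A C hA hC _ a2 ha2 hc2 h4
  have hs : z ∈ openSegment ℝ (((z - c) 2)⁻¹ • (z - c)) ((c 2)⁻¹ • c) := by
    refine ⟨(z - c) 2, c 2, h3, h4, ?_, ?_⟩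
    · simp [hz]
    · rw [smul_inv_smul₀ h3.ne', smul_inv_smul₀ h4.ne']; abel
  have := ((mem_extremePoints.1 hext).2 _ m1 _ m2 hs).2
  exfalso
  apply hzC'
  rw [← this]
  exact hC'.smul _ (by positivity) _ hc

lemma poly_local (A : Set (EuclideanSpace ℝ (Fin 3))) (hpoly : IsPolyhedralCone A)
    (hA : UpCone A) (z : EuclideanSpace ℝ (Fin 3)) (hzA : z ∈ A) (hz : z 2 = 1)
    (hext : ∀ v : EuclideanSpace ℝ (Fin 3), v 2 = 0 → z + v ∈ A → z - v ∈ A → v = 0) :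
    ∃ T : ((ℝ × ℝ) × ℝ) ≃L[ℝ] EuclideanSpace ℝ (Fin 3), T (0, 1) = z ∧ (∀ p, (T p) 2 = p.2) ∧
      ∀ᶠ x in nhds z, (x ∈ A ↔ 0 ≤ (T.symm x).1) := by
  classical
  obtain ⟨S, hS⟩ := hpoly
  have hmem : ∀ x, x ∈ A ↔ ∀ s ∈ S, inner ℝ s x ≤ (0 : ℝ) := by
    intro x; rw [hS]; rfl
  set S0 := S.filter (fun s => s ≠ 0 ∧ inner ℝ s z = (0 : ℝ)) with hS0
  have hS0m : ∀ s, s ∈ S0 ↔ s ∈ S ∧ s ≠ 0 ∧ inner ℝ s z = (0 : ℝ) := by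
    intro s; simp [hS0]
  have hloc : ∀ᶠ x in nhds z, (x ∈ A ↔ ∀ s ∈ S0, inner ℝ s x ≤ (0 : ℝ)) := by
    have h1 : ∀ᶠ x in nhds z, ∀ s ∈ S, inner ℝ s z < (0 : ℝ) → inner ℝ s x < (0 : ℝ) := by
      rw [Filter.eventually_all_finset]
      intro s _
      by_cases h : inner ℝ s z < (0 : ℝ)
      · have : Filter.Tendsto (fun x => inner ℝ s x) (nhds z) (nhds (inner ℝ s z)) :=
          (by fun_prop : Continuous fun x => inner ℝ s x).tendsto z
        filter_upwards [this.eventually_lt_const h] with x hx _ using hx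
      · exact Filter.Eventually.of_forall fun x hx => absurd hx h
    filter_upwards [h1] with x hx
    rw [hmem]
    constructor
    · intro h s hs
      exact h s ((hS0m s).1 hs).1
    · intro h s hs
      by_cases hs0 : s = 0
      · simp [hs0]
      rcases ((hmem z).1 hzA s hs).eq_or_lt with h2 | h2
      · exact h s ((hS0m s).2 ⟨hs, hs0, h2⟩)
      · exact (hx s hs h2).le
  have hkey : ∀ v : EuclideanSpace ℝ (Fin 3), v 2 = 0 → (∀ s ∈ S0, inner ℝ s v = (0 : ℝ)) → v = 0 := by
    intro v hv hsv
    have ht : Filter.Tendsto (fun δ : ℝ => z + δ • v) (nhds 0) (nhds z) := by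
      have : Continuous fun δ : ℝ => z + δ • v := by fun_prop
      simpa using this.tendsto 0
    have ht' : Filter.Tendsto (fun δ : ℝ => z - δ • v) (nhds 0) (nhds z) := by
      have : Continuous fun δ : ℝ => z - δ • v := by fun_prop
      simpa using this.tendsto 0
    have h3 : ∀ᶠ δ in nhdsWithin (0 : ℝ) (Set.Ioi 0), 0 < δ := self_mem_nhdsWithin
    obtain ⟨δ, ⟨h1, h2⟩, h3⟩ := ((((ht.eventually hloc).and (ht'.eventually hloc)).filter_mono
      nhdsWithin_le_nhds).and h3).exists
    have := hext (δ • v) (by simp [hv])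
      (h1.2 fun s hs => by
        rw [inner_add_right, inner_smul_right, hsv s hs, ((hS0m s).1 hs).2.2]; simp)
      (h2.2 fun s hs => by
        rw [inner_sub_right, inner_smul_right, hsv s hs, ((hS0m s).1 hs).2.2]; simp)
    exact (smul_eq_zero.1 this).resolve_left h3.ne'
  obtain ⟨e, he⟩ := hA.int
  have heneg : ∀ s ∈ S, s ≠ 0 → inner ℝ s e < (0 : ℝ) := by
    intro s hs hs0
    have ht : Filter.Tendsto (fun δ : ℝ => e + δ • s) (nhds 0) (nhds e) := by
      have : Continuous fun δ : ℝ => e + δ • s := by fun_prop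
      simpa using this.tendsto 0
    have h3 : ∀ᶠ δ in nhdsWithin (0 : ℝ) (Set.Ioi 0), 0 < δ := self_mem_nhdsWithin
    obtain ⟨δ, h1, h2⟩ := (((ht.eventually (isOpen_interior.mem_nhds he)).filter_mono
      nhdsWithin_le_nhds).and h3).exists
    have h4 := (hmem _).1 (interior_subset h1) s hs
    rw [inner_add_right, inner_smul_right, real_inner_self_eq_norm_sq] at h4
    have : 0 < ‖s‖ := norm_pos_iff.2 hs0
    have : 0 < δ * ‖s‖ ^ 2 := by positivity
    linarith
  set e0 := e - (e 2) • z with he0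
  have he02 : e0 2 = 0 := by simp [he0, hz]
  have hn : ∀ s ∈ S0, inner ℝ s e0 < (0 : ℝ) := by
    intro s hs
    obtain ⟨h1, h2, h3⟩ := (hS0m s).1 hs
    rw [he0, inner_sub_right, inner_smul_right, h3, mul_zero, sub_zero]
    exact heneg s h1 h2
  have hne : S0.Nonempty := by
    by_contra hcon
    rw [Finset.not_nonempty_iff_eq_empty] at hcon
    have := hkey (EuclideanSpace.single 0 1) (by simp) (by simp [hcon])
    simp at this
  have he0ne : e0 ≠ 0 := by
    intro h
    obtain ⟨s, hs⟩ := hne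
    have := hn s hs
    simp [h] at this
  set f : EuclideanSpace ℝ (Fin 3) := !₂[-(e0 1), e0 0, 0] with hf
  have hf0 : f 0 = -(e0 1) := by simp [hf]
  have hf1 : f 1 = e0 0 := by simp [hf]
  have hf2 : f 2 = 0 := by simp [hf]
  have hind : ∀ α β : ℝ, α • e0 + β • f = 0 → α = 0 ∧ β = 0 := by
    intro α β h
    have g0 : α * e0 0 - β * e0 1 = 0 := by
      have := congrArg (fun v : EuclideanSpace ℝ (Fin 3) => v 0) h
      simp [hf0] at this
      linarith
    have g1 : α * e0 1 + β * e0 0 = 0 := by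
      have := congrArg (fun v : EuclideanSpace ℝ (Fin 3) => v 1) h
      simp [hf1] at this
      linarith
    have hpos : 0 < (e0 0) ^ 2 + (e0 1) ^ 2 := by
      by_contra hcon
      have a0 : e0 0 = 0 := by nlinarith [sq_nonneg (e0 0), sq_nonneg (e0 1)]
      have a1 : e0 1 = 0 := by nlinarith [sq_nonneg (e0 0), sq_nonneg (e0 1)]
      apply he0ne
      ext i
      fin_cases i
      · exact a0
      · exact a1
      · exact he02
    constructor
    · have : α * ((e0 0) ^ 2 + (e0 1) ^ 2) = 0 := by linear_combination e0 0 * g0 + e0 1 * g1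
      exact (mul_eq_zero.1 this).resolve_right hpos.ne'
    · have : β * ((e0 0) ^ 2 + (e0 1) ^ 2) = 0 := by linear_combination e0 0 * g1 - e0 1 * g0
      exact (mul_eq_zero.1 this).resolve_right hpos.ne'
  set τ : EuclideanSpace ℝ (Fin 3) → ℝ := fun s => inner ℝ s f / (-inner ℝ s e0) with hτ
  have hτe : ∀ s ∈ S0, inner ℝ s f = τ s * (-inner ℝ s e0) := by
    intro s hs
    have := hn s hs
    exact (div_mul_cancel₀ _ (neg_ne_zero.2 this.ne : -inner ℝ s e0 ≠ (0 : ℝ))).symm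
  obtain ⟨m, hm, hmin⟩ := S0.exists_min_image τ hne
  obtain ⟨M, hM, hmax⟩ := S0.exists_max_image τ hne
  have hlt : τ m < τ M := by
    by_contra hcon
    have hall : ∀ s ∈ S0, τ s = τ m := by
      intro s hs
      have a := hmin s hs
      have b := hmax s hs
      linarith
    have := hkey (τ m • e0 + f) (by simp [he02, hf2]) (by
      intro s hs
      rw [inner_add_right, inner_smul_right, hτe s hs, hall s hs]
      ring)
    have := hind (τ m) 1 (by simpa using this)
    exact one_ne_zero this.2
  let L : ((ℝ × ℝ) × ℝ) →ₗ[ℝ] EuclideanSpace ℝ (Fin 3) :=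
    { toFun := fun p => p.1.1 • (τ M • e0 + f) - p.1.2 • (τ m • e0 + f) + p.2 • z
      map_add' := by
        intro p q
        simp only [Prod.fst_add, Prod.snd_add, add_smul]
        abel
      map_smul' := by
        intro c p
        simp only [Prod.smul_fst, Prod.smul_snd, smul_eq_mul, RingHom.id_apply, smul_add, smul_sub,
          smul_smul, mul_assoc] }
  have hLdef : ∀ p, L p = p.1.1 • (τ M • e0 + f) - p.1.2 • (τ m • e0 + f) + p.2 • z := fun p => rfl
  have hL2 : ∀ p, (L p) 2 = p.2 := by
    intro p
    rw [hLdef]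
    simp [he02, hf2, hz]
  have hLinj : Function.Injective L := by
    rw [← LinearMap.ker_eq_bot, LinearMap.ker_eq_bot']
    intro p hp
    have h2 : p.2 = 0 := by rw [← hL2, hp]; rfl
    have h3 : (p.1.1 * τ M - p.1.2 * τ m) • e0 + (p.1.1 - p.1.2) • f = 0 := by
      rw [← hp, hLdef, h2]
      module
    obtain ⟨g1, g2⟩ := hind _ _ h3
    have h4 : p.1.1 * (τ M - τ m) = 0 := by linear_combination g1 - τ m * g2
    have h5 : p.1.1 = 0 := (mul_eq_zero.1 h4).resolve_right (by linarith)
    have h6 : p.1.2 = 0 := by linarith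
    ext
    · exact h5
    · exact h6
    · exact h2
  let T := (L.linearEquivOfInjective hLinj (by simp)).toContinuousLinearEquiv
  have hT : ∀ p, T p = L p := fun p => rfl
  refine ⟨T, ?_, ?_, ?_⟩
  · rw [hT, hLdef]; simp
  · intro p; rw [hT]; exact hL2 p
  · filter_upwards [hloc] with x hx
    rw [hx]
    obtain ⟨p, rfl⟩ := T.surjective x
    rw [T.symm_apply_apply]
    have hin : ∀ s ∈ S0, inner ℝ s (T p) =
        (-inner ℝ s e0) * (p.1.1 * (τ s - τ M) + p.1.2 * (τ m - τ s)) := by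
      intro s hs
      rw [hT, hLdef, inner_add_right, inner_sub_right, inner_smul_right, inner_smul_right,
        inner_smul_right, inner_add_right, inner_add_right, inner_smul_right, inner_smul_right,
        ((hS0m s).1 hs).2.2, hτe s hs]
      ring
    constructor
    · intro h
      refine ⟨?_, ?_⟩
      · have h1 := h m hm
        rw [hin m hm] at h1
        have h2 := hn m hm
        have h3 : p.1.1 * (τ m - τ M) ≤ 0 := by
          by_contra hcon
          nlinarith
        show 0 ≤ p.1.1
        by_contra hcon
        nlinarith
      · have h1 := h M hM
        rw [hin M hM] at h1
        have h2 := hn M hM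
        have h3 : p.1.2 * (τ m - τ M) ≤ 0 := by
          by_contra hcon
          nlinarith
        show 0 ≤ p.1.2
        by_contra hcon
        nlinarith
    · rintro ⟨h1, h2⟩ s hs
      have h1 : 0 ≤ p.1.1 := h1
      have h2 : 0 ≤ p.1.2 := h2
      rw [hin s hs]
      have a := hmin s hs
      have b := hmax s hs
      have c := hn s hs
      have d1 : p.1.1 * (τ s - τ M) ≤ 0 := mul_nonpos_of_nonneg_of_nonpos h1 (by linarith)
      have d2 : p.1.2 * (τ m - τ s) ≤ 0 := mul_nonpos_of_nonneg_of_nonpos h2 (by linarith)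
      exact mul_nonpos_of_nonneg_of_nonpos (by linarith) (by linarith)

lemma core (A C A' C' : Set (EuclideanSpace ℝ (Fin 3))) (hpoly : IsPolyhedralCone A)
    (hA : UpCone A) (hC : UpCone C) (hA' : UpCone A') (hC' : UpCone C')
    (hcov : ∀ x, (volume (A ∩ {w | x - w ∈ C})).toReal = (volume (A' ∩ {w | x - w ∈ C'})).toReal)
    (z : EuclideanSpace ℝ (Fin 3)) (hz : z 2 = 1)
    (hext : z ∈ Set.extremePoints ℝ (convexHull ℝ ((A ∩ {x | x 2 = 1}) ∪ (C ∩ {x | x 2 = 1}))))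
    (hzA : z ∈ A) (hzA' : z ∈ A') (hzC : z ∉ C) (hzC' : z ∉ C')
    (U : Set (EuclideanSpace ℝ (Fin 3))) (hU : U ∈ nhds z)
    (hAU : (A ∩ {x | x 2 = 1}) ∩ U = (A' ∩ {x | x 2 = 1}) ∩ U)
    (u : EuclideanSpace ℝ (Fin 3)) (hu : u ≠ 0) :
    chordFunctionNeg₁ (C ∩ {x | x 2 = 1}) z u = chordFunctionNeg₁ (C' ∩ {x | x 2 = 1}) z u := by
  by_cases hu2 : u 2 = 0
  swap
  · have hemp : ∀ K : Set (EuclideanSpace ℝ (Fin 3)), z ∉ K →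
        {t : ℝ | z + t • u ∈ K ∩ {x | x 2 = 1}} = ∅ := by
      intro K hK
      ext t
      simp only [Set.mem_ofPred_eq, Set.mem_empty_iff_false, iff_false]
      rintro ⟨h1, h2⟩
      have h3 : t * u 2 = 0 := by
        have : z 2 + t * u 2 = 1 := h2
        linarith
      have ht : t = 0 := (mul_eq_zero.1 h3).resolve_right hu2
      rw [ht] at h1
      simp at h1
      exact hK h1
    unfold chordFunctionNeg₁
    rw [hemp C hzC, hemp C' hzC']
  have hv : ∀ v : EuclideanSpace ℝ (Fin 3), v 2 = 0 → z + v ∈ A → z - v ∈ A → v = 0 := by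
    intro v hv h1 h2
    have m1 : z + v ∈ convexHull ℝ ((A ∩ {x | x 2 = 1}) ∪ (C ∩ {x | x 2 = 1})) :=
      subset_convexHull _ _ (Or.inl ⟨h1, by simp [hz, hv]⟩)
    have m2 : z - v ∈ convexHull ℝ ((A ∩ {x | x 2 = 1}) ∪ (C ∩ {x | x 2 = 1})) :=
      subset_convexHull _ _ (Or.inl ⟨h2, by simp [hz, hv]⟩)
    have hs : z ∈ openSegment ℝ (z + v) (z - v) :=
      ⟨1 / 2, 1 / 2, by norm_num, by norm_num, by norm_num, by module⟩
    have := ((mem_extremePoints.1 hext).2 _ m1 _ m2 hs).1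
    simpa using this
  obtain ⟨T, hTz, hT2, hloc⟩ := poly_local A hpoly hA z hzA hz hv
  have hTz' : T.symm z = (0, 1) := by rw [← hTz]; simp
  have hAA' : ∀ᶠ x in nhds z, (x ∈ A ↔ x ∈ A') := by
    have hc : Continuous fun x : EuclideanSpace ℝ (Fin 3) => x 2 := by fun_prop
    have h1 : ∀ᶠ x in nhds z, 0 < x 2 :=
      (hc.tendsto z).eventually_const_lt (by rw [hz]; norm_num)
    have h2 : Filter.Tendsto (fun x : EuclideanSpace ℝ (Fin 3) => (x 2)⁻¹ • x) (nhds z) (nhds z) := by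
      have := ((hc.tendsto z).inv₀ (by rw [hz]; norm_num)).smul (Filter.tendsto_id (x := nhds z))
      simpa [hz] using this
    filter_upwards [h1, h2.eventually hU] with x hx hxU
    have hx1 : ((x 2)⁻¹ • x) 2 = 1 := by simp [hx.ne']
    have hiff : ∀ K, UpCone K → (x ∈ K ↔ (x 2)⁻¹ • x ∈ (K ∩ {x | x 2 = 1}) ∩ U) := by
      intro K hK
      constructor
      · intro h
        exact ⟨⟨hK.smul _ (by positivity) _ h, hx1⟩, hxU⟩
      · rintro ⟨⟨h, -⟩, -⟩
        have := hK.smul (x 2) hx.le _ h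
        rwa [smul_inv_smul₀ hx.ne'] at this
    rw [hiff A hA, hiff A' hA', hAU]
  have hloc' : ∀ᶠ x in nhds z, (x ∈ A' ↔ 0 ≤ (T.symm x).1) := by
    filter_upwards [hAA', hloc] with x h1 h2
    rw [← h1, h2]
  have htrans : ∀ A₁ C₁ : Set (EuclideanSpace ℝ (Fin 3)), UpCone A₁ → UpCone C₁ → z ∉ C₁ →
      (∀ᶠ x in nhds z, (x ∈ A₁ ↔ 0 ≤ (T.symm x).1)) →
      (∀ x a', a' ∈ A₁ → x - a' ∈ C₁ → ∃ a ∈ A, x - a ∈ C) →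
      ∀ x, 0 ≤ (T.symm x).1 → -x ∈ C₁ → x = 0 := by
    intro A₁ C₁ hA₁ hC₁ hzC₁ hl hsub x hx hxC
    have ht : Filter.Tendsto (fun δ : ℝ => z + δ • x) (nhds 0) (nhds z) := by
      have : Continuous fun δ : ℝ => z + δ • x := by fun_prop
      simpa using this.tendsto 0
    have h3 : ∀ᶠ δ in nhdsWithin (0 : ℝ) (Set.Ioi 0), 0 < δ := self_mem_nhdsWithin
    obtain ⟨δ, h1, h2⟩ := (((ht.eventually hl).filter_mono nhdsWithin_le_nhds).and h3).exists
    have hmem : z + δ • x ∈ A₁ := by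
      apply h1.2
      rw [map_add, map_smul, hTz']
      simpa using smul_nonneg h2.le hx
    have hcm : δ • (-x) ∈ C₁ := hC₁.smul δ h2.le _ hxC
    have hzc : z - δ • (-x) = z + δ • x := by simp
    have := ext_zero A C C₁ hA hC hC₁ z hz hext hzC₁ (δ • (-x)) hcm
      (by rw [hzc]; exact hA₁.nonneg _ hmem)
      (by rw [hzc]; exact hA₁.zero _ hmem)
      (by rw [hzc]; exact hsub _ _ hmem (by simpa using hC₁.zero_mem))
      (hsub _ 0 hA₁.zero_mem (by simpa using hcm))
    have h4 := (smul_eq_zero.1 this).resolve_left h2.ne'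
    simpa using h4
  have hDC := htrans A C hA hC hzC hloc (fun x a' h1 h2 => ⟨a', h1, h2⟩)
  have hDC' := htrans A' C' hA' hC' hzC' hloc'
    (fun x a' h1 h2 => sum_subset A C A' C' hA hC hA' hC' hcov x a' h1 h2)
  have hline := line_eq T z hTz hz A C A' C' hA hC hA' hC' hzA hzA' hzC hzC' hloc hloc' hDC hDC' hcov
  have hsl : ∀ (K : Set (EuclideanSpace ℝ (Fin 3))) (v : EuclideanSpace ℝ (Fin 3)), v 2 = 0 →
      {s : ℝ | v + s • z ∈ K} = Prod.mk (T.symm v).1 ⁻¹' (T ⁻¹' K) := by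
    intro K v hv
    have h2 : (T.symm v).2 = 0 := by rw [← hT2]; simpa using hv
    ext s
    have : T ((T.symm v).1, s) = v + s • z := by
      have e : ((T.symm v).1, s) = T.symm v + s • ((0, 1) : (ℝ × ℝ) × ℝ) := by
        ext <;> simp [h2]
      rw [e, map_add, map_smul, hTz]; simp
    simp [this]
  rw [chord_eq C hC z u hz hzC hu hu2, chord_eq C' hC' z u hz hzC' hu hu2,
    hsl C u hu2, hsl C' u hu2, hsl C (-u) (by simp [hu2]), hsl C' (-u) (by simp [hu2]),
    hline, hline]

lemma upCone_of_poly (K : Set (EuclideanSpace ℝ (Fin 3))) (h : IsPolyhedralCone K)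
    (hint : (interior K).Nonempty) (hup : K ⊆ {x | 0 ≤ x 2}) (h0 : ∀ x ∈ K, x 2 = 0 → x = 0) :
    UpCone K := by
  obtain ⟨S, hS⟩ := h
  have hmem : ∀ x, x ∈ K ↔ ∀ s ∈ S, inner ℝ s x ≤ (0 : ℝ) := by
    intro x; rw [hS]; rfl
  refine ⟨?_, ?_, ?_, fun x hx => hup hx, h0, hint⟩
  · have : K = ⋂ s ∈ S, {x | inner ℝ s x ≤ (0 : ℝ)} := by
      ext x; simp [hmem]
    rw [this]
    exact isClosed_biInter fun s _ => isClosed_le (by fun_prop) continuous_const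
  · intro x hx y hy a b ha hb _
    rw [hmem] at hx hy ⊢
    intro s hs
    rw [inner_add_right, inner_smul_right, inner_smul_right]
    nlinarith [hx s hs, hy s hs]
  · intro t ht x hx
    rw [hmem] at hx ⊢
    intro s hs
    rw [inner_smul_right]
    nlinarith [hx s hs]

lemma poly_neg (K : Set (EuclideanSpace ℝ (Fin 3))) (h : IsPolyhedralCone K) :
    IsPolyhedralCone (-K) := by
  classical
  obtain ⟨S, hS⟩ := h
  refine ⟨S.image (fun s => -s), ?_⟩
  ext x
  rw [Set.mem_neg, hS]
  simp

/-- Under the hypotheses of the cross covariogram problem for cones, at any vertex `z` of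
`H` not in `F ∩ G`, the polygon among `F, G` not containing `z` and the polygon among
`F', G'` not containing `z` have equal `−1`-chord functions at `z`. -/
theorem equal_chord_functions_at_vertices
    (A B A' B' : Set (EuclideanSpace ℝ (Fin 3)))
    (hA : IsPolyhedralCone A) (hB : IsPolyhedralCone B)
    (hA' : IsPolyhedralCone A') (hB' : IsPolyhedralCone B')
    (hAint : (interior A).Nonempty) (hBint : (interior B).Nonempty)
    (hA'int : (interior A').Nonempty) (hB'int : (interior B').Nonempty)
    (hAup : A ⊆ {x | 0 ≤ x 2}) (hBdown : -B ⊆ {x | 0 ≤ x 2})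
    (hA'up : A' ⊆ {x | 0 ≤ x 2}) (hB'down : -B' ⊆ {x | 0 ≤ x 2})
    (hA0 : A ∩ {x | x 2 = 0} = {0}) (hB0 : B ∩ {x | x 2 = 0} = {0})
    (hA'0 : A' ∩ {x | x 2 = 0} = {0}) (hB'0 : B' ∩ {x | x 2 = 0} = {0})
    (hcov : crossCovariogram A B = crossCovariogram A' B')
    (F G F' G' H : Set (EuclideanSpace ℝ (Fin 3)))
    (hF : F = A ∩ {x | x 2 = 1}) (hG : G = (-B) ∩ {x | x 2 = 1})
    (hF' : F' = A' ∩ {x | x 2 = 1}) (hG' : G' = (-B') ∩ {x | x 2 = 1})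
    (hH : H = convexHull ℝ (F ∪ G))
    (h1 : ∀ z ∈ Set.extremePoints ℝ H, (z ∈ F ∩ G ↔ z ∈ F' ∩ G'))
    (h2 : ∀ S, IsEdgeOf H S →
      ((IsEdgeOf F S ∨ IsEdgeOf G S) ↔ (IsEdgeOf F' S ∨ IsEdgeOf G' S)))
    (h3 : ∀ z ∈ Set.extremePoints ℝ H, z ∉ F ∩ G →
      ∃ U ∈ nhds z,
        (z ∈ F → (z ∈ F' ∧ F ∩ U = F' ∩ U) ∨ (z ∈ G' ∧ F ∩ U = G' ∩ U)) ∧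
        (z ∈ G → (z ∈ F' ∧ G ∩ U = F' ∩ U) ∨ (z ∈ G' ∧ G ∩ U = G' ∩ U))) :
    ∀ z ∈ Set.extremePoints ℝ H, z ∉ F ∩ G →
      ∀ K₁ ∈ ({F, G} : Set (Set (EuclideanSpace ℝ (Fin 3)))),
        ∀ K₂ ∈ ({F', G'} : Set (Set (EuclideanSpace ℝ (Fin 3)))),
          z ∉ K₁ → z ∉ K₂ →
          ∀ u : EuclideanSpace ℝ (Fin 3), ‖u‖ = 1 →
            chordFunctionNeg₁ K₁ z u = chordFunctionNeg₁ K₂ z u := by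
  have uA : UpCone A := upCone_of_poly A hA hAint hAup
    (fun x hx h => by have : x ∈ A ∩ {x | x 2 = 0} := ⟨hx, h⟩; rw [hA0] at this; exact this)
  have uA' : UpCone A' := upCone_of_poly A' hA' hA'int hA'up
    (fun x hx h => by have : x ∈ A' ∩ {x | x 2 = 0} := ⟨hx, h⟩; rw [hA'0] at this; exact this)
  have hnegint : ∀ K : Set (EuclideanSpace ℝ (Fin 3)), (interior K).Nonempty →
      (interior (-K)).Nonempty := by
    intro K hK
    have : interior (-K) = -interior K := ((Homeomorph.neg _).preimage_interior K).symm
    rw [this]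
    exact hK.neg
  have uC : UpCone (-B) := upCone_of_poly (-B) (poly_neg B hB) (hnegint B hBint) hBdown
    (fun x hx h => by
      have : -x ∈ B ∩ {x | x 2 = 0} := ⟨hx, by simpa using h⟩
      rw [hB0] at this; simpa using this)
  have uC' : UpCone (-B') := upCone_of_poly (-B') (poly_neg B' hB') (hnegint B' hB'int) hB'down
    (fun x hx h => by
      have : -x ∈ B' ∩ {x | x 2 = 0} := ⟨hx, by simpa using h⟩
      rw [hB'0] at this; simpa using this)
  have c1 : ∀ x, (volume (A ∩ {w | x - w ∈ -B})).toReal =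
      (volume (A' ∩ {w | x - w ∈ -B'})).toReal := by
    intro x
    rw [← crossCov_eq, ← crossCov_eq, neg_neg, neg_neg, hcov]
  have r1 := vol_reflect A (-B) uA.closed uC.closed
  have r2 := vol_reflect A' (-B') uA'.closed uC'.closed
  intro z hzext hzn K₁ hK₁ K₂ hK₂ hzK₁ hzK₂ u hu
  have hu0 : u ≠ 0 := by
    rintro rfl
    simp at hu
  have hzn' : z ∉ F' ∩ G' := fun h => hzn ((h1 z hzext).2 h)
  have hzFG : z ∈ F ∪ G := by
    rw [hH] at hzext
    exact extremePoints_convexHull_subset hzext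
  obtain ⟨U, hU, hUF, hUG⟩ := h3 z hzext hzn
  have hz2 : z 2 = 1 := by
    rcases hzFG with h | h
    · rw [hF] at h; exact h.2
    · rw [hG] at h; exact h.2
  have hzx : z ∈ Set.extremePoints ℝ (convexHull ℝ ((A ∩ {x | x 2 = 1}) ∪ (-B ∩ {x | x 2 = 1}))) := by
    rw [← hF, ← hG, ← hH]; exact hzext
  have hzx' : z ∈ Set.extremePoints ℝ (convexHull ℝ ((-B ∩ {x | x 2 = 1}) ∪ (A ∩ {x | x 2 = 1}))) := by
    rw [Set.union_comm]; exact hzx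
  have mF : z ∈ F ↔ z ∈ A := by rw [hF]; exact ⟨fun h => h.1, fun h => ⟨h, hz2⟩⟩
  have mG : z ∈ G ↔ z ∈ -B := by rw [hG]; exact ⟨fun h => h.1, fun h => ⟨h, hz2⟩⟩
  have mF' : z ∈ F' ↔ z ∈ A' := by rw [hF']; exact ⟨fun h => h.1, fun h => ⟨h, hz2⟩⟩
  have mG' : z ∈ G' ↔ z ∈ -B' := by rw [hG']; exact ⟨fun h => h.1, fun h => ⟨h, hz2⟩⟩
  rcases hzFG with hzF | hzG
  · have hzG : z ∉ G := fun h => hzn ⟨hzF, h⟩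
    have e1 : K₁ = G := by
      rcases hK₁ with h | h
      · exact absurd (h ▸ hzF) hzK₁
      · exact h
    rcases hUF hzF with ⟨hz', hUeq⟩ | ⟨hz', hUeq⟩
    · have hzo : z ∉ G' := fun h => hzn' ⟨hz', h⟩
      have e2 : K₂ = G' := by
        rcases hK₂ with h | h
        · exact absurd (h ▸ hz') hzK₂
        · exact h
      rw [hF, hF'] at hUeq
      rw [e1, e2, hG, hG']
      exact core A (-B) A' (-B') hA uA uC uA' uC' c1 z hz2 hzx (mF.1 hzF) (mF'.1 hz')
        (fun h => hzG (mG.2 h)) (fun h => hzo (mG'.2 h)) U hU hUeq u hu0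
    · have hzo : z ∉ F' := fun h => hzn' ⟨h, hz'⟩
      have e2 : K₂ = F' := by
        rcases hK₂ with h | h
        · exact h
        · exact absurd (h ▸ hz') hzK₂
      rw [hF, hG'] at hUeq
      rw [e1, e2, hG, hF']
      exact core A (-B) (-B') A' hA uA uC uC' uA' (fun x => by rw [← r2, c1]) z hz2 hzx
        (mF.1 hzF) (mG'.1 hz')
        (fun h => hzG (mG.2 h)) (fun h => hzo (mF'.2 h)) U hU hUeq u hu0
  · have hzF : z ∉ F := fun h => hzn ⟨h, hzG⟩
    have e1 : K₁ = F := by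
      rcases hK₁ with h | h
      · exact h
      · exact absurd (h ▸ hzG) hzK₁
    rcases hUG hzG with ⟨hz', hUeq⟩ | ⟨hz', hUeq⟩
    · have hzo : z ∉ G' := fun h => hzn' ⟨hz', h⟩
      have e2 : K₂ = G' := by
        rcases hK₂ with h | h
        · exact absurd (h ▸ hz') hzK₂
        · exact h
      rw [hG, hF'] at hUeq
      rw [e1, e2, hF, hG']
      exact core (-B) A A' (-B') (poly_neg B hB) uC uA uA' uC' (fun x => by rw [← r1, c1]) z hz2 hzx'
        (mG.1 hzG) (mF'.1 hz')
        (fun h => hzF (mF.2 h)) (fun h => hzo (mG'.2 h)) U hU hUeq u hu0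
    · have hzo : z ∉ F' := fun h => hzn' ⟨h, hz'⟩
      have e2 : K₂ = F' := by
        rcases hK₂ with h | h
        · exact h
        · exact absurd (h ▸ hz') hzK₂
      rw [hG, hG'] at hUeq
      rw [e1, e2, hF, hF']
      exact core (-B) A (-B') A' (poly_neg B hB) uC uA uC' uA'
        (fun x => by rw [← r1, ← r2, c1]) z hz2 hzx'
        (mG.1 hzG) (mG'.1 hz')
        (fun h => hzF (mF.2 h)) (fun h => hzo (mF'.2 h)) U hU hUeq u hu0
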